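/- arXiv:1105.4962 — 6 statements merged into one kernel-verified Lean document; each statement's English description precedes it below -/
import Mathlib

section
/- Let n ≥ 1, let λ : Fin n → ℝ, and let h : Fin n → Fin n → Fin n → ℝ be fully symmetric, i.e. h i j k is invariant under all permutations of (i,j,k). Define Ξ = Σ_{i,j,k} (h i j k)²·(λ_k² − 2 λ_i λ_j), S = Σ_i λ_i², and |h|² = Σ_{i,j,k} (h i j k)². Then 3Ξ ≤ ((√17 + 1)/2)·S·|h|². -/
theorem sum_cyclic_rotate {ι : Type*} [Fintype ι] (f : ι → ι → ι → ℝ) :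
    ∑ i, ∑ j, ∑ k, f j k i = ∑ i, ∑ j, ∑ k, f i j k := by
  rw [Finset.sum_comm]
  exact Finset.sum_congr rfl fun _ _ => Finset.sum_comm

/-- The cyclically symmetrized coefficient of `(h i j k) ^ 2` is bounded by any `C ≥ 2` with
`C ^ 2 = C + 4` times the sum of squares; the extremal case has exactly two coinciding indices. -/
theorem cyclic_coefficient_le {ι : Type*} [Fintype ι] (x : ι → ℝ) {C : ℝ}
    (hC : 2 ≤ C) (hC_sq : C ^ 2 = C + 4) (i j k : ι) :
    x i ^ 2 + x j ^ 2 + x k ^ 2 - 2 * (x i * x j + x j * x k + x k * x i) ≤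
      C * ∑ l, x l ^ 2 := by
  classical
  have sum_subset (s : Finset ι) : C * ∑ l ∈ s, x l ^ 2 ≤ C * ∑ l, x l ^ 2 := by
    gcongr
    exact s.subset_univ
  have pair_le (a b : ℝ) : b ^ 2 - 4 * (a * b) ≤ C * (a ^ 2 + b ^ 2) := by
    have hmul : C * (C * (a ^ 2 + b ^ 2) - (b ^ 2 - 4 * (a * b))) = (C * a + 2 * b) ^ 2 := by
      linear_combination b ^ 2 * hC_sq
    have hnonneg := nonneg_of_mul_nonneg_right (hmul ▸ sq_nonneg (C * a + 2 * b))
      (by linarith : 0 < C)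
    linarith
  have coincident_le (p q : ι) : x q ^ 2 - 4 * (x p * x q) ≤ C * ∑ l, x l ^ 2 := by
    by_cases hpq : p = q
    · subst hpq
      have : 0 ≤ C * ∑ l, x l ^ 2 := by positivity
      nlinarith [sq_nonneg (x p)]
    · have hsum := sum_subset {p, q}
      rw [Finset.sum_pair hpq] at hsum
      exact (pair_le _ _).trans hsum
  by_cases hij : i = j
  · subst hij
    linarith [coincident_le i k]
  by_cases hjk : j = k
  · subst hjk
    linarith [coincident_le j i]
  by_cases hik : i = k
  · subst hik
    linarith [coincident_le i j]
  have hsum := sum_subset {i, j, k}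
  rw [Finset.sum_insert (by simp [hij, hik]), Finset.sum_pair hjk] at hsum
  have htwo : 2 * (x i ^ 2 + (x j ^ 2 + x k ^ 2)) ≤ C * (x i ^ 2 + (x j ^ 2 + x k ^ 2)) := by
    gcongr
  linarith [sq_nonneg (x i + x j + x k)]

theorem xi_pointwise_estimate (n : ℕ) (hn : 1 ≤ n) (lam : Fin n → ℝ)
    (h : Fin n → Fin n → Fin n → ℝ)
    (hsymm₁ : ∀ i j k : Fin n, h i j k = h j i k)
    (hsymm₂ : ∀ i j k : Fin n, h i j k = h i k j) :
    3 * (∑ i : Fin n, ∑ j : Fin n, ∑ k : Fin n,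
        (h i j k) ^ 2 * ((lam k) ^ 2 - 2 * lam i * lam j)) ≤
      (Real.sqrt 17 + 1) / 2 * (∑ i : Fin n, (lam i) ^ 2) *
        (∑ i : Fin n, ∑ j : Fin n, ∑ k : Fin n, (h i j k) ^ 2) := by
  have hsqrt : Real.sqrt 17 ^ 2 = 17 := Real.sq_sqrt (by norm_num)
  have hC : 2 ≤ (Real.sqrt 17 + 1) / 2 := by
    have : (3 : ℝ) ≤ Real.sqrt 17 := Real.le_sqrt_of_sq_le (by norm_num)
    linarith
  have hC_sq : ((Real.sqrt 17 + 1) / 2) ^ 2 = (Real.sqrt 17 + 1) / 2 + 4 := by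
    linear_combination hsqrt / 4
  have hcyc (i j k : Fin n) : h j k i = h i j k := by
    rw [hsymm₂ j k i, hsymm₁ j i k]
  let F (i j k : Fin n) : ℝ := (h i j k) ^ 2 * ((lam k) ^ 2 - 2 * lam i * lam j)
  have hrot := sum_cyclic_rotate F
  have hrot_twice := sum_cyclic_rotate fun i j k => F j k i
  calc 3 * ∑ i, ∑ j, ∑ k, F i j k
      = ∑ i, ∑ j, ∑ k, (F i j k + F j k i + F k i j) := by
        simp only [Finset.sum_add_distrib]
        linarith
    _ ≤ ∑ i, ∑ j, ∑ k, (Real.sqrt 17 + 1) / 2 * (∑ l, lam l ^ 2) * h i j k ^ 2 := by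
        refine Finset.sum_le_sum fun i _ => Finset.sum_le_sum fun j _ =>
          Finset.sum_le_sum fun k _ => ?_
        have hbound := mul_le_mul_of_nonneg_right
          (cyclic_coefficient_le lam hC hC_sq i j k) (sq_nonneg (h i j k))
        simp only [F, hcyc i j k, ← hcyc k i j]
        linarith
    _ = _ := by simp only [Finset.mul_sum]
end

section
/- For all real numbers a, b, c with ab ≤ 0 and ac ≤ 0, one has (|ab| + |ac|)³ ≤ (a − b)²·a²·b² + (a − c)²·a²·c². -/
theorem four_mul_abs_mul_cube_le {a b : ℝ} (hab : a * b ≤ 0) :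
    4 * |a * b| ^ 3 ≤ (a - b) ^ 2 * a ^ 2 * b ^ 2 := by
  rw [abs_of_nonpos hab]
  linarith [sq_nonneg ((a + b) * (a * b))]

theorem sum_abs_cube_bound (a b c : ℝ) (hab : a * b ≤ 0) (hac : a * c ≤ 0) :
    (|a * b| + |a * c|) ^ 3 ≤
      (a - b) ^ 2 * a ^ 2 * b ^ 2 + (a - c) ^ 2 * a ^ 2 * c ^ 2 := by
  have h := add_pow_le (abs_nonneg (a * b)) (abs_nonneg (a * c)) 3
  norm_num only at h
  linarith [four_mul_abs_mul_cube_le hab, four_mul_abs_mul_cube_le hac]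
end

section
/- For all real numbers a, b, c, one has −(ab + bc + ca) ≤ ((a − b)²a²b² + (b − c)²b²c² + (c − a)²c²a²)^{1/3}, where the right-hand side is the real cube root of the (nonnegative) expression in parentheses. -/
/-- The cube of `-(ab + ac)` is bounded by a sum of squares, without any sign assumption on
`b * c`. -/
lemma neg_mul_add_cube_le {a b c : ℝ} (h : a * (b + c) ≤ 0) :
    (-(a * (b + c))) ^ 3 ≤ (a - b) ^ 2 * a ^ 2 * b ^ 2 + (c - a) ^ 2 * c ^ 2 * a ^ 2 := by
  have h₁ : 0 ≤ -(a * (b + c)) * (a * (b - c)) ^ 2 := mul_nonneg (neg_nonneg.2 h) (sq_nonneg _)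
  linarith [sq_nonneg (a * b * (a + b)), sq_nonneg (a * c * (a + c)),
    show (a - b) ^ 2 * a ^ 2 * b ^ 2 + (c - a) ^ 2 * c ^ 2 * a ^ 2 - (-(a * (b + c))) ^ 3 =
      (a * b * (a + b)) ^ 2 + (a * c * (a + c)) ^ 2 +
        3 * (-(a * (b + c)) * (a * (b - c)) ^ 2) by ring]

lemma neg_sum_products_le_cube_root_of_mul_nonneg {a b c : ℝ} (hbc : 0 ≤ b * c) :
    -(a * b + b * c + c * a) ≤
      ((a - b) ^ 2 * a ^ 2 * b ^ 2 + (b - c) ^ 2 * b ^ 2 * c ^ 2 +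
        (c - a) ^ 2 * c ^ 2 * a ^ 2) ^ ((1 : ℝ) / 3) := by
  rcases le_total (a * (b + c)) 0 with h | h
  · have hneg : 0 ≤ -(a * (b + c)) := neg_nonneg.2 h
    calc -(a * b + b * c + c * a) ≤ -(a * (b + c)) := by linarith
      _ = ((-(a * (b + c))) ^ 3) ^ ((1 : ℝ) / 3) := by
        rw [one_div]
        exact (Real.pow_rpow_inv_natCast hneg three_ne_zero).symm
      _ ≤ _ := by
        refine Real.rpow_le_rpow (pow_nonneg hneg 3) ?_ (by norm_num)
        have h₁ : 0 ≤ (b - c) ^ 2 * b ^ 2 * c ^ 2 := by positivity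
        linarith [neg_mul_add_cube_le h]
  · calc -(a * b + b * c + c * a) ≤ 0 := by linarith
      _ ≤ _ := by positivity

/-- Among any three real numbers, some pair has a nonnegative product. -/
lemma exists_pair_mul_nonneg (a b c : ℝ) : 0 ≤ b * c ∨ 0 ≤ c * a ∨ 0 ≤ a * b := by
  by_contra! h
  obtain ⟨h₁, h₂, h₃⟩ := h
  have h₄ : 0 < b * c * (c * a) := mul_pos_of_neg_of_neg h₁ h₂
  linarith [mul_neg_of_pos_of_neg h₄ h₃, sq_nonneg (a * b * c),
    show b * c * (c * a) * (a * b) = (a * b * c) ^ 2 by ring]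

theorem neg_sum_products_le_cube_root (a b c : ℝ) :
    -(a * b + b * c + c * a) ≤
      ((a - b) ^ 2 * a ^ 2 * b ^ 2 + (b - c) ^ 2 * b ^ 2 * c ^ 2 +
        (c - a) ^ 2 * c ^ 2 * a ^ 2) ^ ((1 : ℝ) / 3) := by
  rcases exists_pair_mul_nonneg a b c with h | h | h
  · exact neg_sum_products_le_cube_root_of_mul_nonneg h
  · convert neg_sum_products_le_cube_root_of_mul_nonneg (a := b) h using 2 <;> ring
  · convert neg_sum_products_le_cube_root_of_mul_nonneg (a := c) h using 2 <;> ring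
end

section
/- For all real numbers a and b, (−a² − 4ab)³ ≤ ζ(1 + √(3/2))^{−1}·(a − b)²·a²·b², where ζ(x) = x²(1 + x)²·(4x − 1)^{−3}. -/
noncomputable def zeta (x : ℝ) : ℝ := x ^ 2 * (1 + x) ^ 2 * ((4 * x - 1) ^ 3)⁻¹

/-- The reciprocal of the minimum value of `zeta` in closed form. -/
theorem inv_zeta_one_add_sqrt :
    (zeta (1 + Real.sqrt (3 / 2)))⁻¹ = 96 * Real.sqrt (3 / 2) - 108 := by
  have hs : Real.sqrt (3 / 2) ^ 2 = 3 / 2 := Real.sq_sqrt (by norm_num)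
  have hs0 : 0 ≤ Real.sqrt (3 / 2) := Real.sqrt_nonneg _
  unfold zeta
  generalize Real.sqrt (3 / 2) = s at hs hs0 ⊢
  rw [mul_inv, inv_inv, inv_mul_eq_iff_eq_mul₀ (by positivity)]
  grind

theorem cube_bound_via_zeta (a b : ℝ) :
    (-a ^ 2 - 4 * a * b) ^ 3 ≤
      (zeta (1 + Real.sqrt (3 / 2)))⁻¹ * (a - b) ^ 2 * a ^ 2 * b ^ 2 := by
  rw [inv_zeta_one_add_sqrt]
  have hs : Real.sqrt (3 / 2) ^ 2 = 3 / 2 := Real.sq_sqrt (by norm_num)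
  have hlow : 1.22472 ≤ Real.sqrt (3 / 2) := Real.le_sqrt_of_sq_le (by norm_num)
  generalize Real.sqrt (3 / 2) = s at hs hlow ⊢
  have hK : 0 < 96 * s - 108 := by linarith
  have hquad : 0 ≤ (96 * s - 108) * b ^ 2 - (168 * s - 208) * a * b + (10 - 8 * s) * a ^ 2 := by
    refine nonneg_of_mul_nonneg_right (a := 96 * s - 108) ?_ hK
    have hdisc : 0 ≤ (19296 * s - 23632) * a ^ 2 :=
      mul_nonneg (by linarith) (sq_nonneg a)
    have hsq := sq_nonneg ((96 * s - 108) * b - (84 * s - 104) * a)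
    linear_combination hdisc + hsq + 7824 * a ^ 2 * hs
  have hfactor : (96 * s - 108) * (a - b) ^ 2 * a ^ 2 * b ^ 2 - (-a ^ 2 - 4 * a * b) ^ 3 =
      a ^ 2 * (b + (1 + s) * a) ^ 2 *
        ((96 * s - 108) * b ^ 2 - (168 * s - 208) * a * b + (10 - 8 * s) * a ^ 2) := by
    grind
  have hprod := mul_nonneg (mul_nonneg (sq_nonneg a) (sq_nonneg (b + (1 + s) * a))) hquad
  linarith
end

section
/- Let n ≥ 1, let λ : Fin n → ℝ, and let h : Fin n → Fin n → Fin n → ℝ be fully symmetric, i.e. h i j k is invariant under all permutations of (i,j,k). Define Ξ = Σ_{i,j,k} (h i j k)²·(λ_k² − 2 λ_i λ_j), S = Σ_i λ_i², |h|² = Σ_{i,j,k} (h i j k)², f = Σ_{i,j} (λ_i − λ_j)²·λ_i²·λ_j², and C₁ = (2√6 + 3)/(21√6 + 103/2)^{1/3}. Then 3Ξ ≤ (S + C₁·f^{1/3})·|h|², where f^{1/3} is the real cube root of the nonnegative number f. -/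
noncomputable def C₁ : ℝ :=
  (2 * Real.sqrt 6 + 3) / (21 * Real.sqrt 6 + 103 / 2) ^ ((1 : ℝ) / 3)

lemma C₁_nonneg : 0 ≤ C₁ := by
  unfold C₁
  positivity

lemma C₁_cube : C₁ ^ 3 = 24 * Real.sqrt 6 - 54 := by
  have hs : Real.sqrt 6 ^ 2 = 6 := Real.sq_sqrt (by norm_num)
  have hK : (0 : ℝ) < 21 * Real.sqrt 6 + 103 / 2 := by positivity
  have hr : ((21 * Real.sqrt 6 + 103 / 2) ^ ((1 : ℝ) / 3)) ^ 3
      = 21 * Real.sqrt 6 + 103 / 2 := by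
    rw [← Real.rpow_natCast, ← Real.rpow_mul hK.le]
    norm_num
  rw [C₁, div_pow, hr, div_eq_iff hK.ne']
  linear_combination (8 * Real.sqrt 6 - 468) * hs

lemma sqrt_six_bounds : 2.449 < Real.sqrt 6 ∧ Real.sqrt 6 < 2.4495 :=
  ⟨Real.lt_sqrt_of_sq_lt (by norm_num), (Real.sqrt_lt' (by norm_num)).2 (by norm_num)⟩

/-- Comparison with `C₁ * f ^ (1 / 3)` reduces to a comparison of cubes. -/
lemma le_C₁_mul_rpow_of_cube_le {X f : ℝ} (hf : 0 ≤ f) (hX : X ^ 3 ≤ C₁ ^ 3 * f) :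
    X ≤ C₁ * f ^ ((1 : ℝ) / 3) := by
  have hr : (f ^ ((1 : ℝ) / 3)) ^ 3 = f := by
    rw [← Real.rpow_natCast, ← Real.rpow_mul hf]
    norm_num
  have hodd : Odd 3 := by decide
  refine hodd.strictMono_pow.le_iff_le.1 ?_
  rwa [mul_pow, hr]

/-- The sharp estimate for two eigenvalues; equality holds at `b = -(1 + √6 / 2) * a`. -/
lemma cube_le_of_pair (a b : ℝ) :
    (-4 * a * b - a ^ 2) ^ 3 ≤ C₁ ^ 3 * (2 * ((a - b) ^ 2 * a ^ 2 * b ^ 2)) := by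
  rw [C₁_cube]
  obtain ⟨h₁, h₂⟩ := sqrt_six_bounds
  have hs : Real.sqrt 6 ^ 2 = 6 := Real.sq_sqrt (by norm_num)
  set s := Real.sqrt 6
  have hq : 0 ≤ (48 * s - 108) * b ^ 2 - (84 * s - 208) * (a * b) + (10 - 4 * s) * a ^ 2 := by
    nlinarith [sq_nonneg (b + a / 8), sq_nonneg a,
      mul_nonneg (sub_nonneg.2 h₁.le) (sq_nonneg (a - b)),
      mul_nonneg (sub_nonneg.2 h₂.le) (sq_nonneg (a + b)),
      mul_nonneg (sub_nonneg.2 h₂.le) (sq_nonneg a),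
      mul_nonneg (sub_nonneg.2 h₁.le) (sq_nonneg b)]
  have hprod := mul_nonneg (mul_nonneg (sq_nonneg a) (sq_nonneg (b + (1 + s / 2) * a))) hq
  have key : (24 * s - 54) * (2 * ((a - b) ^ 2 * a ^ 2 * b ^ 2)) - (-4 * a * b - a ^ 2) ^ 3
      = a ^ 2 * (b + (1 + s / 2) * a) ^ 2 *
        ((48 * s - 108) * b ^ 2 - (84 * s - 208) * (a * b) + (10 - 4 * s) * a ^ 2) := by
    ring_nf
    have hs3 : s ^ 3 = 6 * s := by linear_combination s * hs
    simp only [hs3, hs]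
    ring
  linarith

lemma cube_le_of_mul_nonneg {a b c : ℝ} (hbc : 0 ≤ b * c) :
    (-(a * b + b * c + c * a)) ^ 3 ≤
      (a - b) ^ 2 * a ^ 2 * b ^ 2 + (b - c) ^ 2 * b ^ 2 * c ^ 2 + (c - a) ^ 2 * c ^ 2 * a ^ 2 := by
  have h₀ : 0 ≤ (b - c) ^ 2 * b ^ 2 * c ^ 2 := by positivity
  have h₁ : 4 * (-(a * b)) ^ 3 ≤ (a - b) ^ 2 * a ^ 2 * b ^ 2 := by
    nlinarith [sq_nonneg ((a + b) * (a * b))]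
  have h₂ : 4 * (-(c * a)) ^ 3 ≤ (c - a) ^ 2 * c ^ 2 * a ^ 2 := by
    nlinarith [sq_nonneg ((a + c) * (c * a))]
  rcases le_total 0 (-(a * b + b * c + c * a)) with hp | hp
  · have huv : 0 ≤ -(a * b) + -(c * a) := by linarith
    have h₃ : (-(a * b + b * c + c * a)) ^ 3 ≤ (-(a * b) + -(c * a)) ^ 3 :=
      pow_le_pow_left₀ hp (by linarith) 3
    have h₄ := mul_nonneg huv (sq_nonneg (a * b - c * a))
    nlinarith
  · have h₃ : (-(a * b + b * c + c * a)) ^ 3 ≤ 0 := Odd.pow_nonpos (by decide) hp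
    have : 0 ≤ (a - b) ^ 2 * a ^ 2 * b ^ 2 := by positivity
    have : 0 ≤ (c - a) ^ 2 * c ^ 2 * a ^ 2 := by positivity
    linarith

lemma cube_le_of_triple (a b c : ℝ) :
    (-2 * (a * b + b * c + c * a)) ^ 3 ≤ C₁ ^ 3 * (2 * ((a - b) ^ 2 * a ^ 2 * b ^ 2 +
      (b - c) ^ 2 * b ^ 2 * c ^ 2 + (c - a) ^ 2 * c ^ 2 * a ^ 2)) := by
  have hC : 4 ≤ C₁ ^ 3 := by
    rw [C₁_cube]
    linarith [sqrt_six_bounds.1]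
  have hmain : (-(a * b + b * c + c * a)) ^ 3 ≤
      (a - b) ^ 2 * a ^ 2 * b ^ 2 + (b - c) ^ 2 * b ^ 2 * c ^ 2 + (c - a) ^ 2 * c ^ 2 * a ^ 2 := by
    rcases exists_pair_mul_nonneg a b c with h | h | h
    · exact cube_le_of_mul_nonneg h
    · convert cube_le_of_mul_nonneg (a := b) h using 1 <;> ring
    · convert cube_le_of_mul_nonneg (a := c) h using 1 <;> ring
  have hnn : 0 ≤ (a - b) ^ 2 * a ^ 2 * b ^ 2 + (b - c) ^ 2 * b ^ 2 * c ^ 2 +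
      (c - a) ^ 2 * c ^ 2 * a ^ 2 := by positivity
  nlinarith [mul_le_mul_of_nonneg_right hC hnn]

section Coefficient

variable {ι : Type*} [Fintype ι] (lam : ι → ℝ)

lemma sum_pair_le_sum (T : Finset ι) :
    ∑ i ∈ T, ∑ j ∈ T, (lam i - lam j) ^ 2 * lam i ^ 2 * lam j ^ 2 ≤
      ∑ i, ∑ j, (lam i - lam j) ^ 2 * lam i ^ 2 * lam j ^ 2 :=
  (Finset.sum_le_sum fun _ _ => Finset.sum_le_univ_sum_of_nonneg fun _ => by positivity).trans
    (Finset.sum_le_univ_sum_of_nonneg fun _ => Finset.sum_nonneg fun _ _ => by positivity)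

lemma sum_sq_le_sum_sq (T : Finset ι) : ∑ i ∈ T, lam i ^ 2 ≤ ∑ i, lam i ^ 2 :=
  Finset.sum_le_univ_sum_of_nonneg fun _ => sq_nonneg _

lemma sum_pair_nonneg : 0 ≤ ∑ i, ∑ j, (lam i - lam j) ^ 2 * lam i ^ 2 * lam j ^ 2 :=
  Finset.sum_nonneg fun _ _ => Finset.sum_nonneg fun _ _ => by positivity

lemma coefficient_le_of_pair (i k : ι) :
    lam k ^ 2 - 4 * lam i * lam k ≤ (∑ i, lam i ^ 2) +
      C₁ * (∑ i, ∑ j, (lam i - lam j) ^ 2 * lam i ^ 2 * lam j ^ 2) ^ ((1 : ℝ) / 3) := by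
  classical
  by_cases hik : i = k
  · subst hik
    have h₁ : 0 ≤ ∑ i, lam i ^ 2 := Finset.sum_nonneg fun _ _ => sq_nonneg _
    have h₂ := mul_nonneg C₁_nonneg (Real.rpow_nonneg (sum_pair_nonneg lam) ((1 : ℝ) / 3))
    nlinarith [sq_nonneg (lam i)]
  · have hS := sum_sq_le_sum_sq lam {i, k}
    have hf := sum_pair_le_sum lam {i, k}
    simp only [Finset.sum_pair hik] at hS hf
    have hX := le_C₁_mul_rpow_of_cube_le (X := -4 * lam i * lam k - lam i ^ 2)
      (sum_pair_nonneg lam) ((cube_le_of_pair (lam i) (lam k)).trans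
        (mul_le_mul_of_nonneg_left (by linarith) (pow_nonneg C₁_nonneg 3)))
    linarith

lemma coefficient_le (i j k : ι) :
    lam i ^ 2 + lam j ^ 2 + lam k ^ 2 - 2 * (lam i * lam j + lam j * lam k + lam k * lam i) ≤
      (∑ i, lam i ^ 2) +
        C₁ * (∑ i, ∑ j, (lam i - lam j) ^ 2 * lam i ^ 2 * lam j ^ 2) ^ ((1 : ℝ) / 3) := by
  classical
  by_cases hij : i = j
  · subst hij
    linarith [coefficient_le_of_pair lam i k]
  by_cases hjk : j = k
  · subst hjk
    linarith [coefficient_le_of_pair lam j i]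
  by_cases hik : i = k
  · subst hik
    linarith [coefficient_le_of_pair lam i j]
  have hS := sum_sq_le_sum_sq lam {i, j, k}
  have hf := sum_pair_le_sum lam {i, j, k}
  have hmem : i ∉ ({j, k} : Finset ι) := by simp [hij, hik]
  simp only [Finset.sum_insert hmem, Finset.sum_pair hjk] at hS hf
  have hX := le_C₁_mul_rpow_of_cube_le
    (X := -2 * (lam i * lam j + lam j * lam k + lam k * lam i))
    (sum_pair_nonneg lam) ((cube_le_of_triple (lam i) (lam j) (lam k)).trans
      (mul_le_mul_of_nonneg_left (by linarith) (pow_nonneg C₁_nonneg 3)))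
  linarith

/-- Symmetrization of the cubic curvature term over the three indices. -/
lemma three_mul_sum_eq (h : ι → ι → ι → ℝ) (hsymm₁ : ∀ i j k, h i j k = h j i k)
    (hsymm₂ : ∀ i j k, h i j k = h i k j) :
    3 * (∑ i, ∑ j, ∑ k, h i j k ^ 2 * (lam k ^ 2 - 2 * lam i * lam j)) =
      ∑ i, ∑ j, ∑ k, h i j k ^ 2 * (lam i ^ 2 + lam j ^ 2 + lam k ^ 2 -
        2 * (lam i * lam j + lam j * lam k + lam k * lam i)) := by
  have h₁ : ∑ i, ∑ j, ∑ k, h i j k ^ 2 * (lam k ^ 2 - 2 * lam i * lam j) =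
      ∑ i, ∑ j, ∑ k, h i j k ^ 2 * (lam j ^ 2 - 2 * lam i * lam k) := by
    refine Finset.sum_congr rfl fun i _ => ?_
    rw [Finset.sum_comm]
    simp only [fun j k => hsymm₂ i j k]
  have h₂ : ∑ i, ∑ j, ∑ k, h i j k ^ 2 * (lam j ^ 2 - 2 * lam i * lam k) =
      ∑ i, ∑ j, ∑ k, h i j k ^ 2 * (lam i ^ 2 - 2 * lam j * lam k) := by
    rw [Finset.sum_comm]
    refine Finset.sum_congr rfl fun i _ => Finset.sum_congr rfl fun j _ =>
      Finset.sum_congr rfl fun k _ => ?_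
    rw [hsymm₁]
  calc _ = (∑ i, ∑ j, ∑ k, h i j k ^ 2 * (lam k ^ 2 - 2 * lam i * lam j)) +
        (∑ i, ∑ j, ∑ k, h i j k ^ 2 * (lam j ^ 2 - 2 * lam i * lam k)) +
        ∑ i, ∑ j, ∑ k, h i j k ^ 2 * (lam i ^ 2 - 2 * lam j * lam k) := by
        rw [← h₂, ← h₁]; ring
    _ = _ := by
        simp only [← Finset.sum_add_distrib]
        refine Finset.sum_congr rfl fun i _ => Finset.sum_congr rfl fun j _ =>
          Finset.sum_congr rfl fun k _ => ?_
        ring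

end Coefficient

theorem xi_refined_estimate (n : ℕ) (hn : 1 ≤ n) (lam : Fin n → ℝ)
    (h : Fin n → Fin n → Fin n → ℝ)
    (hsymm₁ : ∀ i j k : Fin n, h i j k = h j i k)
    (hsymm₂ : ∀ i j k : Fin n, h i j k = h i k j) :
    3 * (∑ i : Fin n, ∑ j : Fin n, ∑ k : Fin n,
        (h i j k) ^ 2 * ((lam k) ^ 2 - 2 * lam i * lam j)) ≤
      ((∑ i : Fin n, (lam i) ^ 2) +
          C₁ * (∑ i : Fin n, ∑ j : Fin n,
            (lam i - lam j) ^ 2 * (lam i) ^ 2 * (lam j) ^ 2) ^ ((1 : ℝ) / 3)) *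
        (∑ i : Fin n, ∑ j : Fin n, ∑ k : Fin n, (h i j k) ^ 2) := by
  rw [three_mul_sum_eq lam h hsymm₁ hsymm₂]
  simp only [Finset.mul_sum]
  refine Finset.sum_le_sum fun i _ => Finset.sum_le_sum fun j _ => Finset.sum_le_sum fun k _ => ?_
  rw [mul_comm]
  exact mul_le_mul_of_nonneg_right (coefficient_le lam i j k) (sq_nonneg _)
end

section
/- Let n ≥ 1, let λ : Fin n → ℝ, and let h : Fin n → Fin n → Fin n → Fin n → ℝ be symmetric in its first three arguments (h i j k l is invariant under all permutations of (i,j,k)) and satisfy the commutation relation h i j i j − h j i j i = λ_i·λ_j·(λ_i − λ_j) for all i, j. Then Σ_{i,j,k,l} (h i j k l)² ≥ (3/4)·Σ_{i,j} (λ_i − λ_j)²·λ_i²·λ_j². -/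
/-- The squared norm of a 4-tensor symmetric in its first three indices dominates three times the
off-diagonal sum of the squares of its components `h i i j j`. -/
lemma three_mul_sum_offDiag_sq_le {ι : Type*} [Fintype ι] [DecidableEq ι]
    (h : ι → ι → ι → ι → ℝ)
    (hsymm₁ : ∀ i j k l, h i j k l = h j i k l)
    (hsymm₂ : ∀ i j k l, h i j k l = h i k j l) :
    3 * ∑ i, ∑ j, (if i = j then 0 else h i i j j ^ 2) ≤
      ∑ i, ∑ j, ∑ k, ∑ l, h i j k l ^ 2 := by
  set b : ι → ι → ℝ := fun i j => if i = j then 0 else h i i j j ^ 2 with hb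
  have hpt : ∀ i j k l, (if k = l then if i = j then b i k else 0 else 0) +
      (if j = l then if i = k then b i j else 0 else 0) +
      (if i = l then if j = k then b j i else 0 else 0) ≤ h i j k l ^ 2 := by
    intro i j k l
    have hsq := sq_nonneg (h i j k l)
    have h₁ := hsymm₁ i j k l
    have h₂ := hsymm₂ i j k l
    have h₃ := hsymm₂ j i k l
    simp only [hb]
    clear hb b
    grind
  calc 3 * ∑ i, ∑ j, b i j
      = ∑ i, ∑ j, ∑ k, ∑ l, ((if k = l then if i = j then b i k else 0 else 0) +
          (if j = l then if i = k then b i j else 0 else 0) +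
          (if i = l then if j = k then b j i else 0 else 0)) := by
        have hswap : ∑ i, ∑ j, b j i = ∑ i, ∑ j, b i j := Finset.sum_comm
        simp only [Finset.sum_add_distrib, Finset.sum_ite_eq, Finset.mem_univ, if_true,
          Finset.sum_ite_irrel, Finset.sum_const_zero, hswap]
        ring
    _ ≤ _ := by
        gcongr
        exact hpt _ _ _ _

theorem second_derivative_lower_bound (n : ℕ) (hn : 1 ≤ n) (lam : Fin n → ℝ)
    (h : Fin n → Fin n → Fin n → Fin n → ℝ)
    (hsymm₁ : ∀ i j k l : Fin n, h i j k l = h j i k l)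
    (hsymm₂ : ∀ i j k l : Fin n, h i j k l = h i k j l)
    (hcomm : ∀ i j : Fin n, h i j i j - h j i j i = lam i * lam j * (lam i - lam j)) :
    (3 / 4) * (∑ i : Fin n, ∑ j : Fin n,
        (lam i - lam j) ^ 2 * (lam i) ^ 2 * (lam j) ^ 2) ≤
      ∑ i : Fin n, ∑ j : Fin n, ∑ k : Fin n, ∑ l : Fin n, (h i j k l) ^ 2 := by
  refine le_trans ?_ (three_mul_sum_offDiag_sq_le h hsymm₁ hsymm₂)
  set b : Fin n → Fin n → ℝ := fun i j => if i = j then 0 else h i i j j ^ 2 with hb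
  have hpair : ∀ i j, (lam i - lam j) ^ 2 * lam i ^ 2 * lam j ^ 2 ≤ 2 * (b i j + b j i) := by
    intro i j
    by_cases hij : i = j
    · simp [hb, hij]
    · have hc := hcomm i j
      rw [hsymm₂ i j i j, hsymm₂ j i j i] at hc
      have hsq : (lam i - lam j) ^ 2 * lam i ^ 2 * lam j ^ 2 =
          (h i i j j - h j j i i) ^ 2 := by rw [hc]; ring
      simp only [hb, if_neg hij, if_neg (Ne.symm hij), hsq]
      linarith [sq_nonneg (h i i j j + h j j i i)]
  have hsum : ∑ i, ∑ j, (lam i - lam j) ^ 2 * lam i ^ 2 * lam j ^ 2 ≤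
      ∑ i, ∑ j, 2 * (b i j + b j i) :=
    Finset.sum_le_sum fun i _ => Finset.sum_le_sum fun j _ => hpair i j
  have hswap : ∑ i, ∑ j, b j i = ∑ i, ∑ j, b i j := Finset.sum_comm
  simp only [← Finset.mul_sum, Finset.sum_add_distrib, hswap] at hsum
  linarith
end
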